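/- Let p be a prime, ε ∈ ℝ, f an integer with 1 ≤ f ≤ p−1, and r an integer with 2 ≤ r ≤ p−1. Then there exists at least one point x of the constellation Λ_p such that | ( f·x + ε·x − ε·(r·x)* )* | ≥ (L/p)·| ε mod [−1/4, 1/4) |. -/

import Mathlib

open MeasureTheory ProbabilityTheory Real Filter
open scoped ENNReal

noncomputable section

/-- Reduction of `x` modulo the half-open interval `[a, b)`. -/
def modIco (a b x : ℝ) : ℝ := a + (b - a) * Int.fract ((x - a) / (b - a))

/-- `L = √12`. -/
def Lc : ℝ := Real.sqrt 12

/-- `x*`: reduction of `x` modulo the basic interval `I = [-L/2, L/2)`. -/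
def starI (x : ℝ) : ℝ := modIco (-(Lc / 2)) (Lc / 2) x

/-- `δ(p, γ) = min_{l ∈ {1,…,p−1}} |l·γ − ⌊l·γ⌉|`. -/
def deltaP (p : ℕ) (γ : ℝ) : ℝ :=
  sInf {d : ℝ | ∃ l : ℕ, 1 ≤ l ∧ l ≤ p - 1 ∧ d = |(l : ℝ) * γ - round ((l : ℝ) * γ)|}

/-- The set `P'(γ)` of admissible primes (depends on the SNR). -/
def Pgood (SNR : ℝ) (γ : ℝ) : Set ℕ :=
  {p | p.Prime ∧
    Real.exp (-(3 * SNR / (2 * (p : ℝ) ^ 2)) * (modIco (-(1/4)) (1/4) γ) ^ 2) <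
      1 - 2 * (p : ℝ) * Real.exp (-(3 * SNR / 8))}

/-- First rate expression in the achievable-rate theorem. -/
def rateA (SNR : ℝ) (p : ℕ) (γ : ℝ) : ℝ :=
  -(1/2) * Real.logb 2 (1/(p : ℝ)^2 + Real.sqrt (2 * π / (3 * SNR))
    + (1/(p : ℝ)) * Real.exp (-(3 * SNR / (2 * (p : ℝ)^2)) * (deltaP p γ)^2)
    + 2 * Real.exp (-(3 * SNR / 8)))

/-- Second rate expression in the achievable-rate theorem. -/
def rateB (SNR : ℝ) (p : ℕ) (γ : ℝ) : ℝ :=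
  -Real.logb 2 (1/(p : ℝ) + Real.sqrt (2 * π / (3 * (deltaP p γ)^2 * SNR))
    + 2 * Real.exp (-(3 * SNR / 8)))

/-- The `k`-th point of the constellation `Λ_p`. -/
def constPt (p : ℕ) (k : ℕ) : ℝ := starI (Lc / (p : ℝ) * (k : ℝ))

/-- The constellation `Λ_p` as a finite set of reals. -/
def constSet (p : ℕ) : Finset ℝ := (Finset.range p).image (constPt p)

/-- The uniform probability measure on the constellation `Λ_p`. -/
def uniformConst (p : ℕ) : Measure ℝ :=
  (p : ℝ≥0∞)⁻¹ • ∑ k ∈ Finset.range p, Measure.dirac (constPt p k)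

/-!
Both reductions in the theorem are distances to a lattice, that is, norms on circles: `|x*|` is the
norm of `x` on `ℝ / Lℤ` and `|ε mod [-1/4, 1/4)|` is the norm of `ε` on `ℝ / (1/2)ℤ`. In units of
`L / p` the point `x = (L / p) k` contributes `f k + ε (k - a k)` on `ℝ / pℤ`, where `a k` is the
centred residue of `r k` modulo `p`.

If `a 1 = -1`, then `k = 1` contributes `f + 2 ε`, whose norm is already on `ℝ / ℤ` at least twice
that of `ε` on `ℝ / (1/2)ℤ`. Otherwise `|a 1| ≥ 2`, so `a` cannot be linear on the centred residues,
because it would outgrow `p / 2`. At a wrap-around `a (k + 1) = a k + a 1 ± p` the contributions of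
`k + 1`, `k` and `1` combine to `∓ p ε`, whose norm is at least `3 |ε mod [-1/4, 1/4)|`; so one of
the three is large.
-/

section CircleNorm

theorem modIco_eq_toIcoMod {a b : ℝ} (hab : a < b) (x : ℝ) :
    modIco a b x = toIcoMod (sub_pos.2 hab) a x := by
  rw [modIco, toIcoMod_eq_add_fract_mul, mul_comm]

theorem abs_modIco_half_period {T : ℝ} (hT : 0 < T) (x : ℝ) :
    |modIco (-(T / 2)) (T / 2) x| = ‖(x : AddCircle T)‖ := by
  have hlt : -(T / 2) < T / 2 := by linarith
  obtain ⟨⟨hlo, hhi⟩, n, hn⟩ :=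
    (toIcoMod_eq_iff (sub_pos.2 hlt)).1 (modIco_eq_toIcoMod hlt x).symm
  set y := modIco (-(T / 2)) (T / 2) x
  have hxy : (x : AddCircle T) = y := by
    rw [hn, sub_neg_eq_add, add_halves, AddCircle.coe_add, AddCircle.coe_zsmul,
      AddCircle.coe_period, smul_zero, add_zero]
  rw [hxy, eq_comm, AddCircle.norm_coe_eq_abs_iff T hT.ne', abs_of_pos hT]
  exact abs_le.2 ⟨hlo, by linarith⟩

theorem norm_coe_le_of_mem_zmultiples {S T : ℝ} (hS : S ∈ AddSubgroup.zmultiples T) (x : ℝ) :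
    ‖(x : AddCircle T)‖ ≤ ‖(x : AddCircle S)‖ := by
  have hS0 : (S : AddCircle T) = 0 := (QuotientAddGroup.eq_zero_iff S).2 hS
  set n := round (S⁻¹ * x)
  have hx : (x : AddCircle T) = ((x - n * S : ℝ) : AddCircle T) := by
    rw [← zsmul_eq_mul, AddCircle.coe_sub, AddCircle.coe_zsmul, hS0, smul_zero, sub_zero]
  rw [AddCircle.norm_eq S, hx]
  exact QuotientAddGroup.norm_mk_le_norm

theorem norm_coe_mul_of_mul_eq {S T t : ℝ} (h : t * T = S) (x : ℝ) :
    ‖((t * x : ℝ) : AddCircle S)‖ = |t| * ‖(x : AddCircle T)‖ := by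
  subst h
  exact AddCircle.norm_coe_mul T x t

end CircleNorm

section CentredResidue

variable {p : ℕ} (hp : 0 < p)
include hp

theorem neg_le_two_mul_bmod (x : ℤ) : -(p : ℤ) ≤ 2 * x.bmod p := by
  have := Int.le_bmod (x := x) hp
  lia

theorem two_mul_bmod_lt (x : ℤ) : 2 * x.bmod p < p := by
  have := Int.bmod_lt (x := x) hp
  lia

theorem exists_bmod_add_eq (x y : ℤ) :
    ∃ s : ℤ, |s| ≤ 1 ∧ (x + y).bmod p = x.bmod p + y.bmod p + p * s := by
  obtain ⟨s, hs⟩ : (p : ℤ) ∣ (x + y).bmod p - (x.bmod p + y.bmod p) := by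
    rw [Int.add_bmod]
    exact Int.dvd_bmod_sub_self
  have hxy := neg_le_two_mul_bmod hp (x + y)
  have hxy' := two_mul_bmod_lt hp (x + y)
  have hx := neg_le_two_mul_bmod hp x
  have hx' := two_mul_bmod_lt hp x
  have hy := neg_le_two_mul_bmod hp y
  have hy' := two_mul_bmod_lt hp y
  have hs_lt : s < 2 := by nlinarith
  have hs_gt : -2 < s := by nlinarith
  exact ⟨s, abs_le.2 ⟨by lia, by lia⟩, by lia⟩

theorem exists_bmod_mul_succ_ne {r : ℤ} (hr : 1 < |r.bmod p|) :
    ∃ k : ℤ, -(p : ℤ) ≤ 2 * k ∧ k < 0 ∧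
      (r * (k + 1)).bmod p ≠ (r * k).bmod p + r.bmod p := by
  by_contra! hlin
  -- The induction descends from `0`: for even `p`, only `-p / 2` is a centred residue.
  have hneg : ∀ j : ℕ, 2 * j ≤ p → (r * -j).bmod p = -j * r.bmod p := by
    intro j
    induction j with
    | zero => simp
    | succ j ih =>
      intro hj
      have hstep := hlin (-(j + 1 : ℕ)) (by lia) (by lia)
      rw [show -((j + 1 : ℕ) : ℤ) + 1 = -j by lia, ih (by lia)] at hstep
      push_cast at hstep ⊢
      linarith
  have hlo := neg_le_two_mul_bmod hp (r * -(p / 2 : ℕ))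
  have hhi := two_mul_bmod_lt hp (r * -(p / 2 : ℕ))
  rw [hneg (p / 2) (by lia)] at hlo hhi
  have hr_lo := neg_le_two_mul_bmod hp r
  have hr_hi := two_mul_bmod_lt hp r
  have hp_half : (p : ℤ) ≤ 2 * (p / 2 : ℕ) + 1 := by lia
  rcases lt_abs.1 hr with h | h <;> nlinarith

theorem exists_bmod_mul_succ_eq {r : ℤ} (hr : 1 < |r.bmod p|) :
    ∃ k s : ℤ, -(p : ℤ) ≤ 2 * k ∧ k < 0 ∧ |s| = 1 ∧
      (r * (k + 1)).bmod p = (r * k).bmod p + r.bmod p + p * s := by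
  obtain ⟨k, hk, hk0, hne⟩ := exists_bmod_mul_succ_ne hp hr
  obtain ⟨s, hs, hadd⟩ := exists_bmod_add_eq hp (r * k) r
  rw [← mul_add_one] at hadd
  have hs0 : s ≠ 0 := by
    rintro rfl
    exact hne (by simpa using hadd)
  exact ⟨k, s, hk, hk0, le_antisymm hs (Int.one_le_abs hs0), hadd⟩

end CentredResidue

section Residual

/-- The quantity `f x + ε x - ε (r x)*` at the point `x = (Lc / p) k`, measured in units of `Lc / p`
and taken modulo `p`; the integer `k` is meant to be a centred residue, `-p ≤ 2 k < p`. -/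
def circleResidual (p : ℕ) (f r : ℤ) (ε : ℝ) (k : ℤ) : AddCircle (p : ℝ) :=
  ((f * k + ε * (k - (r * k).bmod p) : ℝ) : AddCircle (p : ℝ))

variable {p : ℕ} {r : ℤ}

theorem norm_half_le_norm_circleResidual_one (f : ℤ) (ε : ℝ) (hr : r.bmod p = -1) :
    ‖(ε : AddCircle (1 / 2 : ℝ))‖ ≤ ‖circleResidual p f r ε 1‖ := by
  have hf : ((f : ℝ) : AddCircle (1 : ℝ)) = 0 := AddCircle.coe_eq_zero_iff 1 |>.2 ⟨f, by simp⟩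
  calc ‖(ε : AddCircle (1 / 2 : ℝ))‖
      ≤ 2 * ‖(ε : AddCircle (1 / 2 : ℝ))‖ := by linarith [norm_nonneg (ε : AddCircle (1 / 2 : ℝ))]
    _ = ‖((2 * ε : ℝ) : AddCircle (1 : ℝ))‖ := by
      rw [norm_coe_mul_of_mul_eq (by norm_num : (2 : ℝ) * (1 / 2) = 1), abs_two]
    _ = ‖((f + 2 * ε : ℝ) : AddCircle (1 : ℝ))‖ := by rw [AddCircle.coe_add, hf, zero_add]
    _ ≤ ‖((f + 2 * ε : ℝ) : AddCircle (p : ℝ))‖ :=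
      norm_coe_le_of_mem_zmultiples (AddSubgroup.mem_zmultiples_iff.2 ⟨p, by simp⟩) _
    _ = ‖circleResidual p f r ε 1‖ := by
      rw [circleResidual, mul_one r, hr]
      congr 2
      push_cast
      ring

theorem norm_circleResidual_wrap (f : ℤ) (ε : ℝ) {k s : ℤ} (hs : |s| = 1)
    (hwrap : (r * (k + 1)).bmod p = (r * k).bmod p + r.bmod p + p * s) :
    ‖circleResidual p f r ε (k + 1) - circleResidual p f r ε k - circleResidual p f r ε 1‖
      = p * ‖(ε : AddCircle (1 : ℝ))‖ := by
  have hsum : circleResidual p f r ε (k + 1) - circleResidual p f r ε k - circleResidual p f r ε 1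
      = ((p * -s * ε : ℝ) : AddCircle (p : ℝ)) := by
    simp only [circleResidual, ← AddCircle.coe_sub, hwrap, mul_one r]
    congr 1
    push_cast
    ring
  have hs' : ‖((-s * ε : ℝ) : AddCircle (1 : ℝ))‖ = ‖(ε : AddCircle (1 : ℝ))‖ := by
    rcases eq_or_eq_neg_of_abs_eq hs with rfl | rfl <;> simp
  rw [hsum, mul_assoc, norm_coe_mul_of_mul_eq (mul_one (p : ℝ)), hs', Nat.abs_cast]

theorem exists_norm_half_le_norm_circleResidual (hp : 0 < p) (f : ℤ) (ε : ℝ)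
    (hr0 : ¬ (p : ℤ) ∣ r) (hr1 : ¬ (p : ℤ) ∣ r - 1) :
    ∃ k : ℤ, -(p : ℤ) ≤ 2 * k ∧ 2 * k < p ∧
      ‖(ε : AddCircle (1 / 2 : ℝ))‖ ≤ ‖circleResidual p f r ε k‖ := by
  have hp3 : 3 ≤ p := by
    by_contra! hlt
    interval_cases p <;> lia
  by_cases hneg : r.bmod p = -1
  · exact ⟨1, by lia, by lia, norm_half_le_norm_circleResidual_one f ε hneg⟩
  have hne0 : r.bmod p ≠ 0 := mt Int.dvd_of_bmod_eq_zero hr0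
  have hne1 : r.bmod p ≠ 1 := mt Int.dvd_self_sub_of_bmod_eq hr1
  have hr : 1 < |r.bmod p| := lt_abs.2 (by lia)
  obtain ⟨k, s, hk, hk0, hs, hwrap⟩ := exists_bmod_mul_succ_eq hp hr
  by_contra! hsmall
  have hbig : 3 * ‖(ε : AddCircle (1 / 2 : ℝ))‖ ≤ p * ‖(ε : AddCircle (1 : ℝ))‖ := by
    gcongr
    · exact_mod_cast hp3
    · exact norm_coe_le_of_mem_zmultiples (AddSubgroup.mem_zmultiples_iff.2 ⟨2, by norm_num⟩) ε
  rw [← norm_circleResidual_wrap f ε hs hwrap] at hbig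
  have htri : ‖circleResidual p f r ε (k + 1) - circleResidual p f r ε k - circleResidual p f r ε 1‖
      ≤ ‖circleResidual p f r ε (k + 1)‖ + ‖circleResidual p f r ε k‖
        + ‖circleResidual p f r ε 1‖ :=
    (norm_sub_le _ _).trans (by gcongr; exact norm_sub_le _ _)
  linarith [hsmall (k + 1) (by lia) (by lia), hsmall k hk (by lia), hsmall 1 (by lia) (by lia)]

end Residual

section Constellation

theorem Lc_pos : 0 < Lc := Real.sqrt_pos.2 (by norm_num)

theorem abs_starI (x : ℝ) : |starI x| = ‖(x : AddCircle Lc)‖ :=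
  abs_modIco_half_period Lc_pos x

variable {p : ℕ}

theorem starI_div_mul_intCast (hp : 0 < p) (z : ℤ) :
    starI (Lc / p * z) = Lc / p * (z.bmod p : ℤ) := by
  have hL := Lc_pos
  have hp' : (0 : ℝ) < p := by exact_mod_cast hp
  have hlo : -(p : ℝ) ≤ 2 * (z.bmod p : ℤ) := by exact_mod_cast neg_le_two_mul_bmod hp z
  have hhi : 2 * (z.bmod p : ℤ) < (p : ℝ) := by exact_mod_cast two_mul_bmod_lt hp z
  have hz : (z : ℝ) = (z.bmod p : ℤ) + p * (z.bdiv p : ℤ) := by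
    exact_mod_cast (Int.bmod_add_bdiv z p).symm
  rw [starI, modIco_eq_toIcoMod (by linarith), toIcoMod_eq_iff]
  refine ⟨⟨?_, ?_⟩, z.bdiv p, ?_⟩
  · rw [div_mul_eq_mul_div, le_div_iff₀ hp']
    nlinarith
  · rw [div_mul_eq_mul_div, div_lt_iff₀ hp']
    nlinarith
  · rw [hz, zsmul_eq_mul]
    field_simp
    ring

theorem mem_constSet_of_centred {k : ℤ} (hlo : -(p : ℤ) ≤ 2 * k) (hhi : 2 * k < p) :
    Lc / p * (k : ℝ) ∈ constSet p := by
  have hp : 0 < p := by lia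
  have hmod : ((k % p).toNat : ℤ) = k % p := Int.toNat_of_nonneg (Int.emod_nonneg k (by lia))
  have hlt : (k % p).toNat < p := by
    have := Int.emod_lt_of_pos k (show (0 : ℤ) < p by lia)
    lia
  refine Finset.mem_image.2 ⟨(k % p).toNat, Finset.mem_range.2 hlt, ?_⟩
  rw [constPt, ← Int.cast_natCast (k % p).toNat, starI_div_mul_intCast hp, hmod, Int.emod_bmod,
    Int.bmod_eq_of_le_mul_two (by lia) (by lia)]

theorem abs_starI_eq_norm_circleResidual (hp : 0 < p) (f r : ℤ) (ε : ℝ) (k : ℤ) :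
    |starI (f * (Lc / p * k) + ε * (Lc / p * k) - ε * starI (r * (Lc / p * k)))|
      = Lc / p * ‖circleResidual p f r ε k‖ := by
  have hL : Lc / p * p = Lc := div_mul_cancel₀ Lc (by exact_mod_cast hp.ne')
  have hstar : starI (r * (Lc / p * k)) = Lc / p * ((r * k).bmod p : ℤ) := by
    rw [← starI_div_mul_intCast hp, Int.cast_mul, mul_left_comm]
  have hscale := norm_coe_mul_of_mul_eq hL (f * k + ε * (k - (r * k).bmod p))
  rw [abs_of_nonneg (div_nonneg Lc_pos.le p.cast_nonneg)] at hscale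
  rw [hstar, abs_starI, circleResidual, ← hscale]
  congr 2
  ring

end Constellation

theorem exists_large_point_general {p : ℕ} (hp : 0 < p) (ε : ℝ) (f : ℤ) {r : ℤ}
    (hr0 : ¬ (p : ℤ) ∣ r) (hr1 : ¬ (p : ℤ) ∣ r - 1) :
    ∃ x ∈ constSet p,
      (Lc / (p : ℝ)) * |modIco (-(1/4)) (1/4) ε|
        ≤ |starI ((f : ℝ) * x + ε * x - ε * starI ((r : ℝ) * x))| := by
  obtain ⟨k, hlo, hhi, hk⟩ := exists_norm_half_le_norm_circleResidual hp f ε hr0 hr1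
  refine ⟨Lc / p * k, mem_constSet_of_centred hlo hhi, ?_⟩
  rw [abs_starI_eq_norm_circleResidual hp, show (1 / 4 : ℝ) = 1 / 2 / 2 by norm_num,
    abs_modIco_half_period one_half_pos]
  exact mul_le_mul_of_nonneg_left hk (div_nonneg Lc_pos.le p.cast_nonneg)

/-- **Existence of a large point (Case D4).** For a prime `p`, `f ∈ {1,…,p−1}` and
`r ∈ {2,…,p−1}`, there is a constellation point `x ∈ Λ_p` with
`|(f·x + ε·x − ε·(r·x)*)*| ≥ (L/p)·|ε mod [−1/4,1/4)|`. -/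
theorem exists_large_point
    (p : ℕ) (hp : p.Prime) (ε : ℝ)
    (f : ℕ) (hf1 : 1 ≤ f) (hf2 : f ≤ p - 1)
    (r : ℕ) (hr1 : 2 ≤ r) (hr2 : r ≤ p - 1) :
    ∃ x ∈ constSet p,
      (Lc / (p : ℝ)) * |modIco (-(1/4)) (1/4) ε|
        ≤ |starI ((f : ℝ) * x + ε * x - ε * starI ((r : ℝ) * x))| := by
  have h_not_dvd : ¬ (p : ℤ) ∣ r := fun h => by have := Int.le_of_dvd (by lia) h; lia
  have h_not_dvd_pred : ¬ (p : ℤ) ∣ r - 1 := fun h => by have := Int.le_of_dvd (by lia) h; lia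
  exact_mod_cast exists_large_point_general hp.pos ε f h_not_dvd h_not_dvd_pred
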